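/- arXiv:2401.09143 — 4 statements merged into one kernel-verified Lean document; each statement's English description precedes it below -/
import Mathlib

section
/- For all real numbers c and y with 0 ≤ c < 1, −1 < y < 1 and y ≠ 0, one has ∫₀¹ ((x² − c)² + y²)^{−1/2} dx ≤ |y|^{−1/2} · (−log|y| + 4). -/
/-!
Write `c = a²` and `|y| = s²` with `a, s ≥ 0`. For `x ≥ 0` we have
`|x² - a²| = |x - a| (x + a) ≥ (x - a)²`, so the integrand is at most `k (x - a)` with
`k u = (u⁴ + s⁴)^(-1/2) ≤ min (1 / s²) (1 / u²)`. Integrating `1 / s²` over `[-s, s]` and `1 / u²`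
over the two tails gives at most `2 / s + 2 / s = 4 / s`, and the term `-log |y|` is nonnegative.
-/

/-- The translation-invariant kernel dominating the integrand, with `s = √|y|`. -/
noncomputable def kernel (s u : ℝ) : ℝ := (Real.sqrt (u ^ 4 + s ^ 4))⁻¹

lemma kernel_nonneg (s u : ℝ) : 0 ≤ kernel s u := by
  unfold kernel; positivity

lemma kernel_neg (s u : ℝ) : kernel s (-u) = kernel s u := by
  unfold kernel; congr 3; ring

lemma continuous_kernel {s : ℝ} (hs : 0 < s) : Continuous (kernel s) := by
  unfold kernel
  refine Continuous.inv₀ (by fun_prop) fun u => ?_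
  have : 0 < u ^ 4 + s ^ 4 := by positivity
  positivity

lemma kernel_le_const {s : ℝ} (hs : 0 < s) (u : ℝ) : kernel s u ≤ (s ^ 2)⁻¹ := by
  unfold kernel
  apply inv_anti₀ (by positivity)
  apply Real.le_sqrt_of_sq_le
  nlinarith [sq_nonneg (u ^ 2)]

lemma kernel_le_inv_sq (s : ℝ) {u : ℝ} (hu : 0 < u) : kernel s u ≤ (u ^ 2)⁻¹ := by
  unfold kernel
  apply inv_anti₀ (by positivity)
  apply Real.le_sqrt_of_sq_le
  nlinarith [sq_nonneg (s ^ 2)]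

lemma integral_kernel_tail {s : ℝ} (hs : 0 < s) :
    ∫ u in s..(1 + s), kernel s u ≤ s⁻¹ := by
  have hmem : (0 : ℝ) ∉ Set.uIcc s (1 + s) := by
    rw [Set.uIcc_of_le (by linarith)]
    exact fun h => absurd h.1 (not_le.mpr hs)
  have hne : ∀ u ∈ Set.uIcc s (1 + s), u ≠ 0 := fun u hu h => hmem (h ▸ hu)
  have hint : IntervalIntegrable (fun u : ℝ => (u ^ 2)⁻¹) MeasureTheory.volume s (1 + s) := by
    apply ContinuousOn.intervalIntegrable
    exact ContinuousOn.inv₀ (by fun_prop) fun u hu => pow_ne_zero 2 (hne u hu)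
  have hval : ∫ u in s..(1 + s), (u ^ 2)⁻¹ = -(1 + s)⁻¹ - -s⁻¹ := by
    refine intervalIntegral.integral_eq_sub_of_hasDerivAt (f := fun u : ℝ => -u⁻¹) ?_ hint
    intro u hu
    simpa using (hasDerivAt_inv (hne u hu)).fun_neg
  calc ∫ u in s..(1 + s), kernel s u ≤ ∫ u in s..(1 + s), (u ^ 2)⁻¹ := by
        refine intervalIntegral.integral_mono_on (by linarith)
          ((continuous_kernel hs).intervalIntegrable _ _) hint fun u hu => ?_
        exact kernel_le_inv_sq s (hs.trans_le hu.1)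
    _ ≤ s⁻¹ := by
        rw [hval]
        have : 0 < (1 + s)⁻¹ := by positivity
        linarith

lemma integral_kernel_center {s : ℝ} (hs : 0 < s) :
    ∫ u in (-s)..s, kernel s u ≤ 2 * s⁻¹ := by
  calc ∫ u in (-s)..s, kernel s u ≤ ∫ _ in (-s)..s, (s ^ 2)⁻¹ :=
        intervalIntegral.integral_mono_on (by linarith)
          ((continuous_kernel hs).intervalIntegrable _ _) (by simp)
          fun u _ => kernel_le_const hs u
    _ = 2 * s⁻¹ := by
        rw [intervalIntegral.integral_const, smul_eq_mul]
        field_simp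
        ring

lemma integral_kernel_le {s : ℝ} (hs : 0 < s) :
    ∫ u in (-(1 + s))..(1 + s), kernel s u ≤ 4 * s⁻¹ := by
  have hi : ∀ p q : ℝ, IntervalIntegrable (kernel s) MeasureTheory.volume p q :=
    fun p q => (continuous_kernel hs).intervalIntegrable p q
  have hleft : ∫ u in (-(1 + s))..(-s), kernel s u = ∫ u in s..(1 + s), kernel s u := by
    rw [← intervalIntegral.integral_comp_neg]
    simp only [kernel_neg]
  rw [← intervalIntegral.integral_add_adjacent_intervals (hi _ (-s)) (hi _ _),
    ← intervalIntegral.integral_add_adjacent_intervals (hi (-s) s) (hi _ _), hleft]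
  linarith [integral_kernel_tail hs, integral_kernel_center hs]

/-- The comparison `|x² - a²| ≥ (x - a)²` at the level of integrands. -/
lemma integrand_le_kernel {a s x : ℝ} (ha : 0 ≤ a) (hs : 0 < s) (hx : 0 ≤ x) :
    (Real.sqrt ((x ^ 2 - a ^ 2) ^ 2 + s ^ 4))⁻¹ ≤ kernel s (x - a) := by
  unfold kernel
  have hpos : 0 < (x - a) ^ 4 + s ^ 4 := by positivity
  apply inv_anti₀ (Real.sqrt_pos.mpr hpos)
  apply Real.sqrt_le_sqrt
  -- `(x² - a²)² - (x - a)⁴ = 4 a x (x - a)²`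
  have h : 0 ≤ 4 * (a * x) * (x - a) ^ 2 := by positivity
  nlinarith

/-- For all real numbers `c` and `y` with `0 ≤ c < 1`, `-1 < y < 1` and `y ≠ 0`, one has
`∫₀¹ ((x² − c)² + y²)^(−1/2) dx ≤ |y|^(−1/2) · (−log|y| + 4)`. -/
theorem stmt_0 (c y : ℝ) (hc0 : 0 ≤ c) (hc1 : c < 1) (hym : -1 < y) (hyp : y < 1)
    (hy0 : y ≠ 0) :
    (∫ x in (0:ℝ)..1, (Real.sqrt ((x ^ 2 - c) ^ 2 + y ^ 2))⁻¹) ≤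
      (Real.sqrt |y|)⁻¹ * (-Real.log |y| + 4) := by
  have hy : 0 < |y| := abs_pos.mpr hy0
  have hlog : Real.log |y| ≤ 0 := Real.log_nonpos hy.le (abs_lt.mpr ⟨hym, hyp⟩).le
  obtain ⟨s, hsdef⟩ : ∃ s, s = Real.sqrt |y| := ⟨_, rfl⟩
  obtain ⟨a, hadef⟩ : ∃ a, a = Real.sqrt c := ⟨_, rfl⟩
  have hs : 0 < s := hsdef ▸ Real.sqrt_pos.mpr hy
  have ha : 0 ≤ a := hadef ▸ Real.sqrt_nonneg c
  have hac : a ^ 2 = c := by rw [hadef, Real.sq_sqrt hc0]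
  have ha1 : a ≤ 1 := by nlinarith
  have hsy : s ^ 4 = y ^ 2 := by
    rw [← sq_abs y, ← Real.sq_sqrt hy.le, ← hsdef]; ring
  rw [← hsdef, ← hac, ← hsy]
  have hcont : Continuous fun x : ℝ => (Real.sqrt ((x ^ 2 - a ^ 2) ^ 2 + s ^ 4))⁻¹ := by
    refine Continuous.inv₀ (by fun_prop) fun x => ?_
    have : 0 < (x ^ 2 - a ^ 2) ^ 2 + s ^ 4 := by positivity
    positivity
  have hk := continuous_kernel hs
  calc ∫ x in (0:ℝ)..1, (Real.sqrt ((x ^ 2 - a ^ 2) ^ 2 + s ^ 4))⁻¹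
      ≤ ∫ x in (0:ℝ)..1, kernel s (x - a) :=
        intervalIntegral.integral_mono_on zero_le_one (hcont.intervalIntegrable _ _)
          ((hk.comp (continuous_id.sub continuous_const)).intervalIntegrable _ _)
          fun x hx => integrand_le_kernel ha hs hx.1
    _ = ∫ u in (0 - a)..(1 - a), kernel s u :=
        intervalIntegral.integral_comp_sub_right (kernel s) a
    _ ≤ ∫ u in (-(1 + s))..(1 + s), kernel s u :=
        intervalIntegral.integral_mono_interval (by linarith) (by linarith) (by linarith)
          (Filter.Eventually.of_forall fun u => kernel_nonneg s u) (hk.intervalIntegrable _ _)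
    _ ≤ 4 * s⁻¹ := integral_kernel_le hs
    _ ≤ s⁻¹ * (-Real.log |y| + 4) := by
        have : 0 ≤ s⁻¹ * (-Real.log |y|) := mul_nonneg (inv_pos.mpr hs).le (by linarith)
        linarith
end

section
/- Let n ≥ 2 and let ρ : ℝⁿ → ℝ be a smooth function whose differential dρ_x is nonzero at every point x with ρ(x) = 0, and set X = {x ∈ ℝⁿ : ρ(x) = 0} (a smooth hypersurface of dimension n−1). Then the function f(x) = −log(x₁² + x₂²) restricted to X is locally integrable on X with respect to the (n−1)-dimensional Hausdorff measure: every point p ∈ X has an open neighborhood V ⊆ ℝⁿ with ∫_{X ∩ V} |log(x₁² + x₂²)| dμH^{n−1}(x) < ∞. -/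
open MeasureTheory

/-!
Near `p ∈ X` some coordinate derivative `∂ρ/∂x_j (p)` is nonzero. Strict differentiability of `ρ`
then shows that the projection `π` forgetting the `j`-th coordinate is injective with Lipschitz
inverse on `X` near `p` (`exists_edist_le_of_strict`), so that the image under `π` of the Hausdorff
measure on `X` near `p` is at most a constant times Lebesgue measure on a cube of dimension `n - 1`
(`map_restrict_hausdorff_le`).

One of the first two coordinates, say `x_k`, survives the projection, and
`|log (x₁² + x₂²)| ≤ |log x_k²| + C` on bounded sets with `x_k ≠ 0`. The right-hand side depends
on one coordinate only, so its integral over the cube reduces to that of `|log t²|` over a bounded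
interval, which is finite.
-/

open scoped NNReal ENNReal Topology

/-- The projection of Euclidean space forgetting the `j`-th coordinate. The target carries the sup
norm, for which Hausdorff measure is exactly Lebesgue measure. -/
def dropCoord {n : ℕ} (j : Fin n) (x : EuclideanSpace ℝ (Fin n)) : {i : Fin n // i ≠ j} → ℝ :=
  fun i => x i

lemma measurable_dropCoord {n : ℕ} (j : Fin n) : Measurable (dropCoord j) := by
  unfold dropCoord
  fun_prop

lemma exists_apply_single_ne_zero {n : ℕ} {L : EuclideanSpace ℝ (Fin n) →L[ℝ] ℝ} (hL : L ≠ 0) :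
    ∃ j, L (EuclideanSpace.single j 1) ≠ 0 := by
  by_contra! h
  apply hL
  ext x
  have hx : x = ∑ i, x i • EuclideanSpace.single i (1 : ℝ) := by
    ext k
    simp [Pi.single_apply]
  rw [hx]
  simp [h]

lemma norm_sub_single_le {n : ℕ} (j : Fin n) (x y : EuclideanSpace ℝ (Fin n)) :
    ‖x - y - (x j - y j) • EuclideanSpace.single j (1 : ℝ)‖
      ≤ n * dist (dropCoord j x) (dropCoord j y) := by
  set w := x - y - (x j - y j) • EuclideanSpace.single j (1 : ℝ) with hw
  have hx : w = ∑ i, w i • EuclideanSpace.single i (1 : ℝ) := by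
    ext k
    simp [Pi.single_apply]
  have hc : ∀ i, ‖w i‖ ≤ dist (dropCoord j x) (dropCoord j y) := by
    intro i
    by_cases hij : i = j
    · subst hij
      simp [hw]
    · have := dist_le_pi_dist (dropCoord j x) (dropCoord j y) ⟨i, hij⟩
      simpa [hw, hij, dropCoord, Real.dist_eq] using this
  calc ‖w‖ = ‖∑ i, w i • EuclideanSpace.single i (1 : ℝ)‖ := by rw [← hx]
    _ ≤ ∑ i, ‖w i • EuclideanSpace.single i (1 : ℝ)‖ := norm_sum_le _ _
    _ ≤ ∑ _i : Fin n, dist (dropCoord j x) (dropCoord j y) := by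
        refine Finset.sum_le_sum fun i _ => ?_
        rw [norm_smul]
        simpa using hc i
    _ = _ := by simp

/-- If `∂ρ/∂x_j (p) ≠ 0`, then near `p` the projection `dropCoord j` is antilipschitz on the level
set `{ρ = 0}`. This replaces the graph parametrization of the implicit function theorem. -/
lemma exists_edist_le_of_strict {n : ℕ} {ρ : EuclideanSpace ℝ (Fin n) → ℝ}
    {L : EuclideanSpace ℝ (Fin n) →L[ℝ] ℝ} {p : EuclideanSpace ℝ (Fin n)}
    (h : HasStrictFDerivAt ρ L p) {j : Fin n} (hj : L (EuclideanSpace.single j 1) ≠ 0) :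
    ∃ s ∈ 𝓝 p, ∃ K : ℝ≥0, ∀ x ∈ {x | ρ x = 0} ∩ s, ∀ y ∈ {x | ρ x = 0} ∩ s,
      edist x y ≤ K * edist (dropCoord j x) (dropCoord j y) := by
  set c := ‖L (EuclideanSpace.single j 1)‖ with hc
  have hcpos : 0 < c := norm_pos_iff.mpr hj
  obtain ⟨s, hs, hA⟩ := h.approximates_deriv_on_nhds (c := (c / 2).toNNReal)
    (Or.inr (Real.toNNReal_pos.2 (half_pos hcpos)))
  refine ⟨s, hs, ((2 / c * (c / 2 + ‖L‖) + 1) * n).toNNReal, ?_⟩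
  rintro x ⟨hx0, hxs⟩ y ⟨hy0, hys⟩
  have h1 : ‖L (x - y)‖ ≤ c / 2 * ‖x - y‖ := by
    have := hA x hxs y hys
    rw [Set.mem_ofPred_eq] at hx0 hy0
    rw [hx0, hy0, sub_zero, zero_sub, norm_neg, Real.coe_toNNReal _ (by positivity)] at this
    exact this
  have h2 := norm_sub_single_le j x y
  set δ := dist (dropCoord j x) (dropCoord j y)
  set w := x - y - (x j - y j) • EuclideanSpace.single j (1 : ℝ) with hw
  have hxy : x - y = (x j - y j) • EuclideanSpace.single j (1 : ℝ) + w := by rw [hw]; abel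
  have h3 : ‖x - y‖ ≤ |x j - y j| + ‖w‖ := by
    calc ‖x - y‖ ≤ ‖(x j - y j) • EuclideanSpace.single j (1 : ℝ)‖ + ‖w‖ := by
          rw [hxy]; exact norm_add_le _ _
      _ = _ := by rw [norm_smul]; simp
  have h4 : |x j - y j| * c ≤ ‖L (x - y)‖ + ‖L‖ * ‖w‖ := by
    have : (x j - y j) • L (EuclideanSpace.single j (1 : ℝ)) = L (x - y) - L w := by
      rw [← map_smul, ← map_sub, hw]; congr 1; abel
    calc |x j - y j| * c = ‖L (x - y) - L w‖ := by rw [← this, norm_smul, Real.norm_eq_abs]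
      _ ≤ ‖L (x - y)‖ + ‖L w‖ := norm_sub_le _ _
      _ ≤ _ := by gcongr; exact L.le_opNorm w
  have h5 : |x j - y j| ≤ 2 / c * (c / 2 + ‖L‖) * ‖w‖ := by
    have : |x j - y j| * c ≤ (2 / c * (c / 2 + ‖L‖) * ‖w‖) * c := by
      field_simp
      nlinarith
    exact le_of_mul_le_mul_right this hcpos
  have h6 : dist x y ≤ (2 / c * (c / 2 + ‖L‖) + 1) * n * δ := by
    rw [dist_eq_norm]
    calc ‖x - y‖ ≤ (2 / c * (c / 2 + ‖L‖) + 1) * ‖w‖ := by linarith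
      _ ≤ (2 / c * (c / 2 + ‖L‖) + 1) * (n * δ) := by gcongr
      _ = _ := by ring
  rw [edist_dist, edist_dist, ← ENNReal.ofReal, ← ENNReal.ofReal_mul (by positivity)]
  exact ENNReal.ofReal_le_ofReal h6

/-- On a set where `f` is antilipschitz, the Hausdorff measure of a preimage is controlled. -/
lemma hausdorff_inter_preimage_le {X Y : Type*} [EMetricSpace X] [EMetricSpace Y]
    [MeasurableSpace X] [BorelSpace X] [MeasurableSpace Y] [BorelSpace Y]
    {f : X → Y} {A : Set X} {K : ℝ≥0}
    (h : ∀ x ∈ A, ∀ y ∈ A, edist x y ≤ K * edist (f x) (f y)) {d : ℝ} (hd : 0 ≤ d) (t : Set Y) :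
    μH[d] (A ∩ f ⁻¹' t) ≤ (K : ℝ≥0∞) ^ d * μH[d] t := by
  have ha : AntilipschitzWith K (A.domRestrict f) := fun x y => h x x.2 y y.2
  have hi : Isometry (Subtype.val : A → X) := isometry_subtype_coe
  have := ha.hausdorffMeasure_preimage_le hd t
  rw [← hi.hausdorffMeasure_image (Or.inl hd)] at this
  convert this using 2
  ext x
  simp [Set.domRestrict, and_comm]

/-- The image measure of a bounded antilipschitz piece under `dropCoord j` is dominated by Lebesgue
measure on a cube. -/
lemma map_restrict_hausdorff_le {n : ℕ} {j : Fin n} {A : Set (EuclideanSpace ℝ (Fin n))} {K : ℝ≥0}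
    (h : ∀ x ∈ A, ∀ y ∈ A, edist x y ≤ K * edist (dropCoord j x) (dropCoord j y))
    {R : ℝ} (hR : ∀ x ∈ A, ∀ i, |x i| ≤ R) :
    Measure.map (dropCoord j) ((μH[(n : ℝ) - 1]).restrict A) ≤
      ((K : ℝ≥0∞) ^ ((n : ℝ) - 1)) •
        Measure.pi (fun _ : {i : Fin n // i ≠ j} => volume.restrict (Set.Icc (-R) R)) := by
  have hn : 1 ≤ n := j.pos
  have hcard : ((n : ℝ) - 1) = (Fintype.card {i : Fin n // i ≠ j} : ℝ) := by
    simp [Fintype.card_subtype_compl, Nat.cast_sub hn]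
  rw [← Measure.restrict_pi_pi, ← volume_pi]
  refine Measure.le_iff.2 fun t ht => ?_
  rw [Measure.map_apply (measurable_dropCoord j) ht,
    Measure.restrict_apply (measurable_dropCoord j ht), Measure.smul_apply, smul_eq_mul,
    Measure.restrict_apply ht, ← hausdorffMeasure_pi_real, ← hcard]
  refine le_trans (measure_mono ?_) (hausdorff_inter_preimage_le h (by
    rw [hcard]; positivity) _)
  rintro x ⟨hxt, hxA⟩
  exact ⟨hxA, hxt, fun i _ => abs_le.1 (hR x hxA i)⟩

/-- A majorant for `|log (a² + b²)|` in terms of one of the variables `a`, `b`, valid when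
`log (a² + b²) ≤ C` and `0 ≤ C`. The value `⊤` at `0` compensates for `Real.log 0 = 0`. -/
noncomputable def logBound (C : ℝ) (t : ℝ) : ℝ≥0∞ :=
  if t = 0 then ⊤ else ENNReal.ofReal (|Real.log (t ^ 2)| + C)

lemma measurable_logBound (C : ℝ) : Measurable (logBound C) := by
  unfold logBound
  refine Measurable.ite (measurableSet_singleton 0) measurable_const ?_
  fun_prop

lemma ofReal_abs_log_le_logBound {s t M : ℝ} (hM : 1 ≤ M) (hts : t ^ 2 ≤ s) (hsM : s ≤ M) :
    ENNReal.ofReal |Real.log s| ≤ logBound (Real.log M) t := by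
  unfold logBound
  split_ifs with h
  · exact le_top
  · have ht : 0 < t ^ 2 := by positivity
    have h1 := Real.log_le_log ht hts
    have h2 := Real.log_le_log (ht.trans_le hts) hsM
    have h3 := Real.log_nonneg hM
    apply ENNReal.ofReal_le_ofReal
    rw [abs_le]
    have h4 := neg_abs_le (Real.log (t ^ 2))
    have h5 := abs_nonneg (Real.log (t ^ 2))
    constructor <;> linarith

lemma lintegral_logBound_lt_top (C R : ℝ) :
    ∫⁻ t in Set.Icc (-R) R, logBound C t < ⊤ := by
  have hint : IntegrableOn (fun t : ℝ => |Real.log (t ^ 2)| + C) (Set.Icc (-R) R) := by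
    rcases le_total 0 R with hR | hR
    · have h1 : IntegrableOn Real.log (Set.Icc (-R) R) :=
        (intervalIntegrable_iff_integrableOn_Icc_of_le (by linarith)).1
          intervalIntegral.intervalIntegrable_log'
      have h2 : IntegrableOn (fun t : ℝ => |Real.log (t ^ 2)|) (Set.Icc (-R) R) := by
        simp only [Real.log_pow]
        exact (h1.const_mul _).abs
      exact h2.add (integrableOn_const (by simp))
    · refine IntegrableOn.mono_set (t := {0}) (by simp) ?_
      intro t ht
      simp only [Set.mem_Icc, Set.mem_singleton_iff] at *
      linarith
  have hae : logBound C =ᵐ[volume.restrict (Set.Icc (-R) R)]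
      fun t => ENNReal.ofReal (|Real.log (t ^ 2)| + C) := by
    refine ae_restrict_of_ae ?_
    filter_upwards [Measure.ae_ne volume (0 : ℝ)] with t ht
    simp [logBound, ht]
  rw [lintegral_congr_ae hae]
  exact hint.lintegral_lt_top

lemma lintegral_pi_eval_lt_top {ι : Type*} [Fintype ι] [DecidableEq ι] (k : ι) (C R : ℝ) :
    ∫⁻ y, logBound C (y k)
      ∂(Measure.pi (fun _ : ι => volume.restrict (Set.Icc (-R) R))) < ⊤ := by
  have h := lintegral_map (μ := Measure.pi (fun _ : ι => volume.restrict (Set.Icc (-R) R)))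
    (measurable_logBound C) (measurable_pi_apply (X := fun _ : ι => ℝ) k)
  rw [← h]
  change lintegral (Measure.map (Function.eval (β := fun _ : ι => ℝ) k) _) _ < ⊤
  rw [Measure.pi_map_eval, lintegral_smul_measure, smul_eq_mul]
  refine ENNReal.mul_lt_top (ENNReal.prod_lt_top fun i _ => ?_) (lintegral_logBound_lt_top C R)
  exact measure_lt_top _ _

/-- Let `n ≥ 2` and let `ρ : ℝⁿ → ℝ` be smooth with nonvanishing differential at every
point of its zero set `X = {ρ = 0}` (a smooth hypersurface). Then
`x ↦ −log(x₁² + x₂²)` restricted to `X` is locally integrable on `X` with respect to the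
`(n−1)`-dimensional Hausdorff measure: every `p ∈ X` has an open neighborhood `V ⊆ ℝⁿ`
with `∫_{X ∩ V} |log(x₁² + x₂²)| dμH^{n−1}(x) < ∞`. -/
theorem stmt_10 (n : ℕ) (hn : 2 ≤ n) (ρ : EuclideanSpace ℝ (Fin n) → ℝ)
    (hρ : ContDiff ℝ (⊤ : ℕ∞) ρ)
    (hdρ : ∀ x, ρ x = 0 → fderiv ℝ ρ x ≠ 0) :
    ∀ p : EuclideanSpace ℝ (Fin n), ρ p = 0 →
      ∃ V : Set (EuclideanSpace ℝ (Fin n)), IsOpen V ∧ p ∈ V ∧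
        (∫⁻ x in {x | ρ x = 0} ∩ V,
            ENNReal.ofReal
              |Real.log ((x (⟨0, by omega⟩ : Fin n)) ^ 2 + (x (⟨1, by omega⟩ : Fin n)) ^ 2)|
          ∂μH[(n : ℝ) - 1]) < ⊤ := by
  intro p hp
  obtain ⟨j, hj⟩ := exists_apply_single_ne_zero (hdρ p hp)
  have hstrict : HasStrictFDerivAt ρ (fderiv ℝ ρ p) p :=
    hρ.contDiffAt.hasStrictFDerivAt (by simp)
  obtain ⟨s, hs, K, hK⟩ := exists_edist_le_of_strict hstrict hj
  obtain ⟨U, hUs, hUo, hpU⟩ := mem_nhds_iff.1 hs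
  refine ⟨U ∩ Metric.ball p 1, hUo.inter Metric.isOpen_ball, ⟨hpU, by simp⟩, ?_⟩
  set A := {x | ρ x = 0} ∩ (U ∩ Metric.ball p 1) with hA
  have hAm : MeasurableSet A :=
    (isClosed_eq hρ.continuous continuous_const).measurableSet.inter
      (hUo.inter Metric.isOpen_ball).measurableSet
  have hR : ∀ x ∈ A, ∀ i, |x i| ≤ ‖p‖ + 1 := by
    rintro x ⟨-, -, hx⟩ i
    have h1 : ‖x i‖ ≤ ‖x‖ := PiLp.norm_apply_le x i
    have h2 := norm_le_norm_add_norm_sub' x p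
    rw [mem_ball_iff_norm] at hx
    rw [Real.norm_eq_abs] at h1
    linarith
  have hKA : ∀ x ∈ A, ∀ y ∈ A, edist x y ≤ K * edist (dropCoord j x) (dropCoord j y) :=
    fun x hx y hy => hK x ⟨hx.1, hUs hx.2.1⟩ y ⟨hy.1, hUs hy.2.1⟩
  have hmap := map_restrict_hausdorff_le hKA hR
  -- `k` is whichever of the first two coordinates is not the dropped one.
  obtain ⟨k, hkj, hk⟩ : ∃ k : Fin n, k ≠ j ∧ ∀ x : EuclideanSpace ℝ (Fin n),
      x k ^ 2 ≤ x (⟨0, by omega⟩ : Fin n) ^ 2 + x (⟨1, by omega⟩ : Fin n) ^ 2 := by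
    by_cases h0 : (⟨0, by omega⟩ : Fin n) = j
    · refine ⟨⟨1, by omega⟩, ?_, fun x => le_add_of_nonneg_left (sq_nonneg _)⟩
      rw [← h0]
      simp
    · exact ⟨⟨0, by omega⟩, h0, fun x => le_add_of_nonneg_right (sq_nonneg _)⟩
  set M : ℝ := 2 * (‖p‖ + 1) ^ 2 with hM
  have hM1 : 1 ≤ M := by nlinarith [norm_nonneg p]
  calc _ ≤ ∫⁻ x in A, logBound (Real.log M) (dropCoord j x ⟨k, hkj⟩) ∂μH[(n : ℝ) - 1] := by
        refine setLIntegral_mono' hAm fun x hx => ?_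
        refine ofReal_abs_log_le_logBound hM1 (hk x) ?_
        have h0 := sq_le_sq' (abs_le.1 (hR x hx ⟨0, by omega⟩)).1
          (abs_le.1 (hR x hx ⟨0, by omega⟩)).2
        have h1 := sq_le_sq' (abs_le.1 (hR x hx ⟨1, by omega⟩)).1
          (abs_le.1 (hR x hx ⟨1, by omega⟩)).2
        linarith
    _ = ∫⁻ y, logBound (Real.log M) (y ⟨k, hkj⟩)
          ∂(Measure.map (dropCoord j) ((μH[(n : ℝ) - 1]).restrict A)) :=
        (lintegral_map ((measurable_logBound _).comp (measurable_pi_apply _))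
          (measurable_dropCoord j)).symm
    _ ≤ _ := lintegral_mono' hmap le_rfl
    _ < ⊤ := by
        rw [lintegral_smul_measure, smul_eq_mul]
        refine ENNReal.mul_lt_top (ENNReal.rpow_lt_top_of_nonneg ?_ ENNReal.coe_ne_top)
          (lintegral_pi_eval_lt_top _ _ _)
        have : (2 : ℝ) ≤ n := by exact_mod_cast hn
        linarith
end

section
/- Let n ≥ 1, let Y ⊆ ℂ^{n+1} be an open neighborhood of 0, and let φ : Y → ℝ be a smooth function with φ(0) = 0 and dφ_p ≠ 0 for all p ∈ Y, satisfying at least one of: (i) ∂φ/∂z_j(0) ≠ 0 for some j ≥ 2; (ii) there exists v ∈ ℂ^{n+1} with ∂φ₀(v) = 0 and ∂∂̄φ₀(v, v̄) ≠ 0. Then there exists an open neighborhood U ⊆ Y of 0 such that the set {z ∈ U : z₁ = 0 and φ(z) = 0} has 2n-dimensional Hausdorff measure zero. -/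
/-!
Let `H = {z₁ = 0}`, a real vector space of dimension `2n` on which `μH[2n]` is a Haar measure.
The key fact (`hausdorffMeasure_zeros_eq_zero`) is that, for `w ∈ H` and `f` of class `C¹` on an
open set `U`, the points of `H ∩ U` where `f = 0` and `Df(w) ≠ 0` form a null set: each real line
in direction `w` meets this set in a discrete set, and a measurable set whose
traces on all lines of a given direction are null is itself null by Fubini.

If `D₀φ(w) ≠ 0` for some `w ∈ H`, which is the case under (i), this applies to `φ` itself on a
neighbourhood of `0` where `Dφ(w) ≠ 0`. Otherwise `D₀φ` vanishes on `H` but not identically, so the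
vector `v` of (ii) must lie in `H`, and `D²₀φ(w, w) ≠ 0` for `w = v` or `w = iv`. Near `0`, a zero
of `φ` then either satisfies `Dφ(w) ≠ 0`, or is a zero of `Dφ(w)` at which the derivative of
`Dφ(w)` along `w` does not vanish; the key fact applies to both kinds of points.
-/

open MeasureTheory

/-- Borel σ-algebra on `ℂ^{n+1}` with the Euclidean metric. -/
noncomputable instance (m : ℕ) : MeasurableSpace (EuclideanSpace ℂ (Fin m)) := borel _

instance (m : ℕ) : BorelSpace (EuclideanSpace ℂ (Fin m)) := ⟨rfl⟩

/-- The complex partial derivative `∂φ/∂z_j(p) = (1/2)(D_pφ(e_j) − i D_pφ(i e_j))` of a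
real-valued function `φ` on `ℂ^m`. -/
noncomputable def delZ {m : ℕ} (φ : EuclideanSpace ℂ (Fin m) → ℝ)
    (p : EuclideanSpace ℂ (Fin m)) (j : Fin m) : ℂ :=
  (1 / 2 : ℂ) * ((fderiv ℝ φ p (EuclideanSpace.single j (1 : ℂ)) : ℂ) -
    Complex.I * (fderiv ℝ φ p (Complex.I • EuclideanSpace.single j (1 : ℂ)) : ℂ))

/-- The complex hyperplane `{z₁ = 0}` of `ℂ^{n+1}`, as a real subspace. -/
noncomputable def hyperplaneZero (n : ℕ) : Submodule ℝ (EuclideanSpace ℂ (Fin (n + 1))) :=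
  (LinearMap.ker
    (EuclideanSpace.proj 0 : EuclideanSpace ℂ (Fin (n + 1)) →L[ℂ] ℂ).toLinearMap).restrictScalars ℝ

lemma mem_hyperplaneZero {n : ℕ} {z : EuclideanSpace ℂ (Fin (n + 1))} :
    z ∈ hyperplaneZero n ↔ z 0 = 0 := by
  simp [hyperplaneZero]

lemma finrank_hyperplaneZero (n : ℕ) : Module.finrank ℝ (hyperplaneZero n) = 2 * n := by
  let L := (EuclideanSpace.proj 0 : EuclideanSpace ℂ (Fin (n + 1)) →L[ℂ] ℂ).toLinearMap
  have h1 : Module.finrank ℝ (hyperplaneZero n) = 2 * Module.finrank ℂ (LinearMap.ker L) :=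
    finrank_real_of_complex (LinearMap.ker L)
  have hL : Function.Surjective L := fun c =>
    ⟨EuclideanSpace.single 0 c, by simp [L]⟩
  have h2 := L.finrank_range_add_finrank_ker
  rw [LinearMap.range_eq_top.mpr hL, finrank_top, finrank_euclideanSpace_fin,
    Module.finrank_self] at h2
  omega

/-- Zeros of a function of one real variable at which its derivative does not vanish are isolated,
so a set of such points is null. -/
lemma volume_simple_zeros_eq_zero (g : ℝ → ℝ) (T : Set ℝ)
    (hT : ∀ t ∈ T, g t = 0 ∧ ∃ c ≠ 0, HasDerivAt g c t) : volume T = 0 := by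
  refine measure_null_of_locally_null T fun t ht => ⟨{t}, ?_, by simp⟩
  obtain ⟨-, c, hc, hd⟩ := hT t ht
  have h := hd.eventually_ne hc (c := 0)
  rw [eventually_nhdsWithin_iff] at h
  rw [mem_nhdsWithin_iff_eventually]
  filter_upwards [h] with s hs hsT
  by_contra hne
  exact hs hne (hT s hsT).1

/-- The points of `H ∩ U` at which `f` vanishes but its derivative along `w ∈ H` does not form a
null set, where `H = {z₁ = 0}`. -/
lemma hausdorffMeasure_zeros_eq_zero {n : ℕ} {U : Set (EuclideanSpace ℂ (Fin (n + 1)))}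
    (hU : IsOpen U) {f : EuclideanSpace ℂ (Fin (n + 1)) → ℝ} (hf : ContDiffOn ℝ 1 f U)
    {w : EuclideanSpace ℂ (Fin (n + 1))} (hw : w 0 = 0) :
    μH[(2 * n : ℝ)] {z ∈ U | z 0 = 0 ∧ f z = 0 ∧ fderiv ℝ f z w ≠ 0} = 0 := by
  set S : Set (EuclideanSpace ℂ (Fin (n + 1))) := {z ∈ U | f z = 0 ∧ fderiv ℝ f z w ≠ 0} with hS
  have hSm : MeasurableSet S := by
    have h1 : IsOpen (U ∩ f ⁻¹' {0}ᶜ) :=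
      hf.continuousOn.isOpen_inter_preimage hU isOpen_compl_singleton
    have h2 : MeasurableSet {z | fderiv ℝ f z w ≠ 0} :=
      (measurable_fderiv_apply_const ℝ f w) (measurableSet_singleton 0).compl
    have h3 : S = (U \ (U ∩ f ⁻¹' {0}ᶜ)) ∩ {z | fderiv ℝ f z w ≠ 0} := by
      ext z
      simp only [hS, Set.mem_ofPred_eq, Set.mem_inter_iff, Set.mem_sdiff, Set.mem_preimage,
        Set.mem_compl_iff, Set.mem_singleton_iff]
      tauto
    rw [h3]
    exact (hU.measurableSet.diff h1.measurableSet).inter h2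
  let H := hyperplaneZero n
  have himg : {z ∈ U | z 0 = 0 ∧ f z = 0 ∧ fderiv ℝ f z w ≠ 0}
      = (Subtype.val : H → _) '' (Subtype.val ⁻¹' S) := by
    ext z
    constructor
    · rintro ⟨hzU, hz0, hz⟩
      exact ⟨⟨z, mem_hyperplaneZero.mpr hz0⟩, ⟨hzU, hz⟩, rfl⟩
    · rintro ⟨⟨z, hzH⟩, ⟨hzU, hz⟩, rfl⟩
      exact ⟨hzU, mem_hyperplaneZero.mp hzH, hz⟩
  rw [himg, isometry_subtype_coe.hausdorffMeasure_image (Or.inl (by positivity))]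
  have hdim : (2 * n : ℝ) = (Module.finrank ℝ H : ℝ) := by
    rw [finrank_hyperplaneZero]; push_cast; rfl
  rw [hdim]
  let w' : H := ⟨w, mem_hyperplaneZero.mpr hw⟩
  have key := ae_mem_of_ae_add_linearMap_mem (μ := (volume : Measure ℝ))
    (ν := (μH[(Module.finrank ℝ H : ℝ)] : Measure H))
    (LinearMap.toSpanSingleton ℝ H w') (s := (Subtype.val ⁻¹' S)ᶜ)
    (measurable_subtype_coe hSm).compl ?_
  · rwa [ae_iff, ← Set.compl_def, compl_compl] at key
  intro y
  rw [ae_iff]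
  refine volume_simple_zeros_eq_zero (fun t : ℝ => f (y + t • w)) _ fun t ht => ?_
  have ht' : (y : EuclideanSpace ℂ (Fin (n + 1))) + t • w ∈ S := by
    simpa [w'] using ht
  obtain ⟨htU, hf0, hfw⟩ := ht'
  refine ⟨hf0, _, hfw, ?_⟩
  have hd : HasFDerivAt f _ ((y : EuclideanSpace ℂ (Fin (n + 1))) + t • w) :=
    ((hf.contDiffAt (hU.mem_nhds htU)).differentiableAt (by simp)).hasFDerivAt
  have hl : HasDerivAt (fun t : ℝ => (y : EuclideanSpace ℂ (Fin (n + 1))) + t • w) w t := by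
    simpa using ((hasDerivAt_id t).smul_const w).const_add (y : EuclideanSpace ℂ (Fin (n + 1)))
  exact hd.comp_hasDerivAt t hl

/-- Let `n ≥ 1`, `Y ⊆ ℂ^{n+1}` an open neighborhood of `0`, and `φ : Y → ℝ` smooth with
`φ(0) = 0`, `dφ_p ≠ 0` on `Y`, satisfying (i) `∂φ/∂z_j(0) ≠ 0` for some `j ≥ 2`, or
(ii) there is `v` with `∂φ₀(v) = 0` (i.e. `D₀φ(v) = 0 = D₀φ(iv)`) and
`∂∂̄φ₀(v, v̄) ≠ 0` (i.e. `D²₀φ(v, v) + D²₀φ(iv, iv) ≠ 0`). Then there exists an open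
neighborhood `U ⊆ Y` of `0` such that `{z ∈ U : z₁ = 0 ∧ φ(z) = 0}` has `2n`-dimensional
Hausdorff measure zero. -/
theorem stmt_12 (n : ℕ) (hn : 1 ≤ n) (Y : Set (EuclideanSpace ℂ (Fin (n + 1))))
    (hY : IsOpen Y) (h0Y : (0 : EuclideanSpace ℂ (Fin (n + 1))) ∈ Y)
    (φ : EuclideanSpace ℂ (Fin (n + 1)) → ℝ)
    (hφ : ContDiffOn ℝ (⊤ : ℕ∞) φ Y) (hφ0 : φ 0 = 0)
    (hdφ : ∀ p ∈ Y, fderiv ℝ φ p ≠ 0)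
    (hcond : (∃ j : Fin (n + 1), j ≠ 0 ∧ delZ φ 0 j ≠ 0) ∨
      (∃ v : EuclideanSpace ℂ (Fin (n + 1)),
        fderiv ℝ φ 0 v = 0 ∧ fderiv ℝ φ 0 (Complex.I • v) = 0 ∧
        iteratedFDeriv ℝ 2 φ 0 ![v, v] +
          iteratedFDeriv ℝ 2 φ 0 ![Complex.I • v, Complex.I • v] ≠ 0)) :
    ∃ U : Set (EuclideanSpace ℂ (Fin (n + 1))), IsOpen U ∧
      (0 : EuclideanSpace ℂ (Fin (n + 1))) ∈ U ∧ U ⊆ Y ∧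
      μH[(2 * n : ℝ)] {z ∈ U | z 0 = 0 ∧ φ z = 0} = 0 := by
  have hφ1 : ContDiffOn ℝ 1 φ Y := hφ.of_le (by exact_mod_cast le_top)
  have hD : ContDiffOn ℝ 1 (fderiv ℝ φ) Y := hφ.fderiv_of_isOpen hY (by norm_cast)
  have hDw : ∀ w, ContDiffOn ℝ 1 (fun z => fderiv ℝ φ z w) Y := fun w =>
    hD.clm_apply contDiffOn_const
  by_cases hH : ∃ w : EuclideanSpace ℂ (Fin (n + 1)), w 0 = 0 ∧ fderiv ℝ φ 0 w ≠ 0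
  · obtain ⟨w, hw, hne⟩ := hH
    refine ⟨Y ∩ (fun z => fderiv ℝ φ z w) ⁻¹' {0}ᶜ,
      (hDw w).continuousOn.isOpen_inter_preimage hY isOpen_compl_singleton,
      ⟨h0Y, hne⟩, Set.inter_subset_left, ?_⟩
    refine measure_mono_null ?_ (hausdorffMeasure_zeros_eq_zero hY hφ1 hw)
    rintro z ⟨⟨hzY, hzw⟩, hz0, hz⟩
    exact ⟨hzY, hz0, hz, hzw⟩
  push Not at hH
  rcases hcond with ⟨j, hj, hne⟩ | ⟨v, hv, hiv, hne⟩
  · refine absurd ?_ hne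
    simp [delZ, hH (EuclideanSpace.single j (1 : ℂ)) (by simp [hj.symm]),
      hH (Complex.I • EuclideanSpace.single j (1 : ℂ)) (by simp [hj.symm])]
  -- `D₀φ` kills `H` and the complex line `ℂ v`, which would span everything if `v ∉ H`.
  have hv0 : v 0 = 0 := by
    by_contra hv0
    refine hdφ 0 h0Y (ContinuousLinearMap.ext fun u => ?_)
    set c : ℂ := u 0 / v 0 with hc
    have h1 : fderiv ℝ φ 0 (u - c • v) = 0 := hH _ (by simp [hc, hv0])
    have h2 : c • v = c.re • v + c.im • (Complex.I • v) := by
      ext i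
      simp only [PiLp.smul_apply, PiLp.add_apply, smul_eq_mul, Complex.real_smul]
      conv_lhs => rw [← Complex.re_add_im c]
      ring
    rw [map_sub, h2, map_add, map_smul, map_smul, hv, hiv] at h1
    simpa using h1
  obtain ⟨w, hw, hww⟩ : ∃ w : EuclideanSpace ℂ (Fin (n + 1)), w 0 = 0 ∧
      fderiv ℝ (fderiv ℝ φ) 0 w w ≠ 0 := by
    by_contra! hcon
    refine hne ?_
    simp only [iteratedFDeriv_two_apply, Matrix.cons_val_zero, Matrix.cons_val_one]
    rw [hcon v hv0, hcon (Complex.I • v) (by simp [hv0]), add_zero]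
  have hDD : ∀ z ∈ Y, fderiv ℝ (fun z => fderiv ℝ φ z w) z w = fderiv ℝ (fderiv ℝ φ) z w w := by
    intro z hz
    have hd : HasFDerivAt (fderiv ℝ φ) _ z :=
      ((hD.contDiffAt (hY.mem_nhds hz)).differentiableAt (by simp)).hasFDerivAt
    have := hd.clm_apply (hasFDerivAt_const w z)
    rw [this.fderiv]
    simp
  have hcont : ContinuousOn (fun z => fderiv ℝ (fun z => fderiv ℝ φ z w) z w) Y :=
    ((hDw w).continuousOn_fderiv_of_isOpen hY le_rfl).clm_apply continuousOn_const
  refine ⟨Y ∩ (fun z => fderiv ℝ (fun z => fderiv ℝ φ z w) z w) ⁻¹' {0}ᶜ,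
    hcont.isOpen_inter_preimage hY isOpen_compl_singleton,
    ⟨h0Y, by simpa [hDD 0 h0Y] using hww⟩, Set.inter_subset_left, ?_⟩
  refine measure_mono_null ?_ (measure_union_null (hausdorffMeasure_zeros_eq_zero hY hφ1 hw)
    (hausdorffMeasure_zeros_eq_zero hY (hDw w) hw))
  rintro z ⟨⟨hzY, hzw⟩, hz0, hz⟩
  by_cases h : fderiv ℝ φ z w = 0
  · exact Or.inr ⟨hzY, hz0, h, hzw⟩
  · exact Or.inl ⟨hzY, hz0, hz, h⟩
end

section
/- Let n ≥ 1, let D ⊆ ℝ^{2n+1} be an open neighborhood of 0, and let φ : D × D → ℂ be a smooth function such that φ(y, y) = 0 for all y ∈ D, Im φ(x, y) ≥ 0 for all x, y ∈ D, and the partial derivative of Re φ in the last coordinate of the first variable is nonzero at (0, 0), i.e. ∂(Re φ)/∂x_{2n+1}(0, 0) ≠ 0. Then there exist an open neighborhood U ⊆ D of 0 and a constant C > 0 such that for all x, y ∈ U: |x_{2n+1} − y_{2n+1}| ≤ C(|Re φ(x, y)| + |x′ − y′|) and Im φ(x, y) ≤ C(|Re φ(x, y)|² + |x′ − y′|²).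 -/
/-!
Write `φ = f + i g` with `f`, `g` real. Since `f` vanishes on the diagonal, strict
differentiability at the origin gives `f (x, y) = ∂ₓf(0,0) (x - y) + o(‖x - y‖)`
(`eventually_abs_sub_le`), and as the last component of `∂ₓf(0,0)` is nonzero this can be solved
for `x_{2n+1} - y_{2n+1}`, which is the first estimate. Since `g ≥ 0` vanishes on the diagonal,
every diagonal point is a local minimum, so `Dg` vanishes there; `Dg` is locally Lipschitz, and
the mean value inequality yields `g (x, y) ≤ K ‖x - y‖²` (`exists_le_mul_norm_sq`). Splitting
`‖x - y‖²` into its last and its remaining coordinates and inserting the first estimate gives the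
second one.
-/

open Filter Topology

/-- First-order expansion, uniform in both variables, of a function vanishing on the diagonal. -/
lemma eventually_abs_sub_le {E : Type*} [NormedAddCommGroup E] [NormedSpace ℝ E]
    {f : E × E → ℝ} {L : E × E →L[ℝ] ℝ} (hf : HasStrictFDerivAt f L (0, 0))
    (hdiag : ∀ᶠ y in 𝓝 (0 : E), f (y, y) = 0) {ε : ℝ} (hε : 0 < ε) :
    ∀ᶠ p in 𝓝 ((0, 0) : E × E), |f p - L (p.1 - p.2, 0)| ≤ ε * ‖p.1 - p.2‖ := by
  -- Compare `f` at `(x, y)` and at the diagonal point `(y, y)`.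
  have ht : Tendsto (fun p : E × E => (p, (p.2, p.2))) (𝓝 ((0, 0) : E × E))
      (𝓝 (((0, 0) : E × E), ((0, 0) : E × E))) := by
    have : Continuous (fun p : E × E => (p, (p.2, p.2))) := by fun_prop
    exact this.tendsto _
  have ht2 : Tendsto (fun p : E × E => p.2) (𝓝 ((0, 0) : E × E)) (𝓝 0) :=
    continuous_snd.tendsto _
  filter_upwards [ht.eventually (hf.isLittleO.bound hε), ht2.eventually hdiag] with p hp hp2
  have e : p - (p.2, p.2) = (p.1 - p.2, 0) := by ext <;> simp
  simpa [e, hp2, Prod.norm_def] using hp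

/-- A nonnegative `C²` function vanishing on the diagonal vanishes there to second order. -/
lemma exists_le_mul_norm_sq {E : Type*} [NormedAddCommGroup E] [NormedSpace ℝ E]
    {g : E × E → ℝ} (hg : ContDiffAt ℝ 2 g (0, 0))
    (hdiag : ∀ᶠ y in 𝓝 (0 : E), g (y, y) = 0)
    (hnn : ∀ᶠ p in 𝓝 ((0, 0) : E × E), 0 ≤ g p) :
    ∃ K : ℝ, 0 ≤ K ∧ ∀ᶠ p in 𝓝 ((0, 0) : E × E), g p ≤ K * ‖p.1 - p.2‖ ^ 2 := by
  have hd : ContDiffAt ℝ 1 (fderiv ℝ g) (0, 0) := hg.fderiv_right (by norm_num)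
  obtain ⟨K, t, ht, hK⟩ := hd.exists_lipschitzOnWith
  refine ⟨K, K.2, ?_⟩
  have hdiff : ∀ᶠ p in 𝓝 ((0, 0) : E × E), DifferentiableAt ℝ g p :=
    (hg.eventually (by simp)).mono fun p hp => hp.differentiableAt (by simp)
  have hdg : Tendsto (fun p : E × E => p.2) (𝓝 ((0, 0) : E × E)) (𝓝 0) :=
    continuous_snd.tendsto _
  obtain ⟨r, hr, hball⟩ := Metric.eventually_nhds_iff_ball.1
    (((show ∀ᶠ p in 𝓝 ((0, 0) : E × E), p ∈ t from ht).and hdiff).and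
      (hnn.and (hdg.eventually hdiag)))
  filter_upwards [Metric.ball_mem_nhds _ hr] with p hp
  obtain ⟨x, y⟩ := p
  have hyy : (y, y) ∈ Metric.ball ((0, 0) : E × E) r := by
    simp only [Metric.mem_ball, Prod.dist_eq, max_lt_iff] at hp ⊢
    exact ⟨hp.2, hp.2⟩
  have hmin : fderiv ℝ g (y, y) = 0 := by
    apply IsLocalMin.fderiv_eq_zero
    filter_upwards [Metric.isOpen_ball.mem_nhds hyy] with q hq
    have h1 := (hball q hq).2.1
    have h2 := (hball _ hyy).2.2
    simp only at h2
    rw [h2]; exact h1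
  have hseg : segment ℝ (y, y) (x, y) ⊆ Metric.ball ((0, 0) : E × E) r :=
    (convex_ball _ _).segment_subset hyy hp
  have e : ((x, y) : E × E) - (y, y) = (x - y, 0) := by simp
  have hnorm : ‖((x, y) : E × E) - (y, y)‖ = ‖x - y‖ := by simp [e, Prod.norm_def]
  have key := Convex.norm_image_sub_le_of_norm_hasFDerivWithin_le
    (f := g) (f' := fderiv ℝ g) (C := K * ‖x - y‖) (s := segment ℝ (y, y) (x, y))
    (x := (y, y)) (y := (x, y))
    (fun q hq => ((hball q (hseg hq)).1.2.hasFDerivAt).hasFDerivWithinAt)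
    (fun q hq => by
      have h1 := hK.dist_le_mul q (hball q (hseg hq)).1.1 _ (hball _ hyy).1.1
      rw [hmin, dist_zero_right] at h1
      refine h1.trans (mul_le_mul_of_nonneg_left ?_ K.2)
      have := norm_sub_le_of_mem_segment hq
      rwa [dist_eq_norm, ← hnorm])
    (convex_segment _ _) (left_mem_segment _ _ _) (right_mem_segment _ _ _)
  have h2 : g (y, y) = 0 := (hball _ hyy).2.2
  rw [h2, hnorm, sub_zero] at key
  calc g (x, y) ≤ ‖g (x, y)‖ := le_abs_self _
    _ ≤ _ := key
    _ = _ := by ring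

lemma norm_sq_eq_last {m : ℕ} (w : EuclideanSpace ℝ (Fin (m + 1))) :
    ‖w‖ ^ 2 = ∑ j : Fin m, w j.castSucc ^ 2 + w (Fin.last m) ^ 2 := by
  rw [EuclideanSpace.norm_sq_eq, Fin.sum_univ_castSucc]
  simp

/-- A linear form differs from its last-coordinate part by a multiple of the norm of the remaining
coordinates. -/
lemma abs_apply_sub_last_le {m : ℕ} (ℓ : EuclideanSpace ℝ (Fin (m + 1)) →L[ℝ] ℝ)
    (w : EuclideanSpace ℝ (Fin (m + 1))) :
    |ℓ w - w (Fin.last m) * ℓ (EuclideanSpace.single (Fin.last m) 1)| ≤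
      ‖ℓ‖ * Real.sqrt (∑ j : Fin m, w j.castSucc ^ 2) := by
  have h := ℓ.le_opNorm (w - w (Fin.last m) • EuclideanSpace.single (Fin.last m) 1)
  have hn : ‖w - w (Fin.last m) • EuclideanSpace.single (Fin.last m) (1 : ℝ)‖ =
      Real.sqrt (∑ j : Fin m, w j.castSucc ^ 2) := by
    rw [← Real.sqrt_sq (norm_nonneg _), norm_sq_eq_last]
    simp [Fin.castSucc_ne_last]
  rw [hn, map_sub, map_smul, smul_eq_mul] at h
  exact h



/-- Let `n ≥ 1`, let `D ⊆ ℝ^{2n+1}` be an open neighborhood of `0`, and let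
`φ : D × D → ℂ` be a smooth function with `φ(y, y) = 0`, `Im φ ≥ 0` on `D × D`, and
`∂(Re φ)/∂x_{2n+1}(0, 0) ≠ 0`. Then there exist an open neighborhood `U ⊆ D` of `0` and
`C > 0` such that for all `x, y ∈ U`:
`|x_{2n+1} − y_{2n+1}| ≤ C(|Re φ(x, y)| + |x′ − y′|)` and
`Im φ(x, y) ≤ C(|Re φ(x, y)|² + |x′ − y′|²)`, where `x′` collects the first `2n`
coordinates. -/
theorem stmt_13 (n : ℕ) (hn : 1 ≤ n) (D : Set (EuclideanSpace ℝ (Fin (2 * n + 1))))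
    (hD : IsOpen D) (h0D : (0 : EuclideanSpace ℝ (Fin (2 * n + 1))) ∈ D)
    (φ : EuclideanSpace ℝ (Fin (2 * n + 1)) × EuclideanSpace ℝ (Fin (2 * n + 1)) → ℂ)
    (hφ : ContDiffOn ℝ (⊤ : ℕ∞) φ (D ×ˢ D))
    (hdiag : ∀ y ∈ D, φ (y, y) = 0)
    (him : ∀ x ∈ D, ∀ y ∈ D, 0 ≤ (φ (x, y)).im)
    (hder : fderiv ℝ (fun p => (φ p).re) (0, 0)
        (EuclideanSpace.single (Fin.last (2 * n)) (1 : ℝ), 0) ≠ 0) :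
    ∃ U ⊆ D, IsOpen U ∧ (0 : EuclideanSpace ℝ (Fin (2 * n + 1))) ∈ U ∧
      ∃ C > 0, ∀ x ∈ U, ∀ y ∈ U,
        |x (Fin.last (2 * n)) - y (Fin.last (2 * n))| ≤
          C * (|(φ (x, y)).re| +
            Real.sqrt (∑ j : Fin (2 * n), (x j.castSucc - y j.castSucc) ^ 2)) ∧
        (φ (x, y)).im ≤
          C * (|(φ (x, y)).re| ^ 2 +
            ∑ j : Fin (2 * n), (x j.castSucc - y j.castSucc) ^ 2) := by
  have hDD : D ×ˢ D ∈ 𝓝 ((0, 0) : EuclideanSpace ℝ (Fin (2 * n + 1)) × _) :=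
    (hD.prod hD).mem_nhds ⟨h0D, h0D⟩
  have hφ0 : ContDiffAt ℝ (⊤ : ℕ∞) φ (0, 0) := hφ.contDiffAt hDD
  have hf : ContDiffAt ℝ (⊤ : ℕ∞) (fun p => (φ p).re) (0, 0) :=
    Complex.reCLM.contDiff.contDiffAt.comp _ hφ0
  have hg : ContDiffAt ℝ (⊤ : ℕ∞) (fun p => (φ p).im) (0, 0) :=
    Complex.imCLM.contDiff.contDiffAt.comp _ hφ0
  have hDn : ∀ᶠ y in 𝓝 (0 : EuclideanSpace ℝ (Fin (2 * n + 1))), y ∈ D := hD.mem_nhds h0D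
  set L := fderiv ℝ (fun p => (φ p).re) (0, 0) with hL
  set a := L (EuclideanSpace.single (Fin.last (2 * n)) (1 : ℝ), 0) with ha
  have hapos : 0 < |a| := abs_pos.2 hder
  have hA := eventually_abs_sub_le (hf.hasStrictFDerivAt (by simp))
    (hDn.mono fun y hy => by simp [hdiag y hy]) (half_pos hapos)
  obtain ⟨K, hK0, hB⟩ := exists_le_mul_norm_sq (hg.of_le (WithTop.coe_le_coe.2 (le_top : (2 : ℕ∞) ≤ ⊤)))
    (hDn.mono fun y hy => by simp [hdiag y hy])
    (by filter_upwards [hDD] with p hp using him _ hp.1 _ hp.2)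
  obtain ⟨r, hr, hball⟩ := Metric.eventually_nhds_iff_ball.1 (hA.and hB)
  let ℓ := L.comp (ContinuousLinearMap.inl ℝ (EuclideanSpace ℝ (Fin (2 * n + 1)))
    (EuclideanSpace ℝ (Fin (2 * n + 1))))
  -- `C₁` is the constant of the first estimate, coming from the choice `ε = |a| / 2`.
  let C₁ : ℝ := 2 / |a| * (1 + ‖ℓ‖ + |a| / 2)
  have hC₁ : 0 < C₁ := by positivity
  refine ⟨D ∩ Metric.ball 0 r, Set.inter_subset_left, hD.inter Metric.isOpen_ball,
    ⟨h0D, Metric.mem_ball_self hr⟩, C₁ + K * (2 * C₁ ^ 2 + 1), by positivity, ?_⟩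
  rintro x ⟨-, hx⟩ y ⟨-, hy⟩
  have hxy : (x, y) ∈ Metric.ball
      ((0, 0) : EuclideanSpace ℝ (Fin (2 * n + 1)) × EuclideanSpace ℝ (Fin (2 * n + 1))) r := by
    rw [Metric.mem_ball, Prod.dist_eq, max_lt_iff]
    exact ⟨hx, hy⟩
  obtain ⟨h1, h2⟩ := hball _ hxy
  have h3 := abs_apply_sub_last_le ℓ (x - y)
  have h4 := norm_sq_eq_last (x - y)
  have hℓ : ∀ w, ℓ w = L (w, 0) := fun w => rfl
  simp only [hℓ, ← ha, PiLp.sub_apply] at h1 h2 h3 h4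
  set S := ∑ j : Fin (2 * n), (x j.castSucc - y j.castSucc) ^ 2 with hS
  set s := Real.sqrt S
  set u := x (Fin.last (2 * n)) - y (Fin.last (2 * n))
  set F := (φ (x, y)).re
  have hS0 : 0 ≤ S := Finset.sum_nonneg fun _ _ => sq_nonneg _
  have hs0 : 0 ≤ s := Real.sqrt_nonneg _
  have hsS : s ^ 2 = S := Real.sq_sqrt hS0
  have hF0 : 0 ≤ |F| := abs_nonneg _
  have hnorm : ‖x - y‖ ≤ s + |u| := by
    apply (sq_le_sq₀ (norm_nonneg _) (by positivity)).1
    rw [h4, ← hsS, ← sq_abs u]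
    nlinarith [mul_nonneg hs0 (abs_nonneg u)]
  have hua : |u| * |a| ≤ |F| + (‖ℓ‖ * s + |a| / 2 * (s + |u|)) := by
    rw [← abs_mul]
    have e : u * a = F - (F - L (x - y, 0)) - (L (x - y, 0) - u * a) := by ring
    have t1 := abs_sub (F - (F - L (x - y, 0))) (L (x - y, 0) - u * a)
    have t2 := abs_sub F (F - L (x - y, 0))
    rw [← e] at t1
    have t3 := mul_le_mul_of_nonneg_left hnorm (half_pos hapos).le
    linarith
  have hu : |u| ≤ C₁ * (|F| + s) := by
    have h5 : |u| * (|a| / 2) ≤ (1 + ‖ℓ‖ + |a| / 2) * (|F| + s) := by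
      nlinarith [mul_nonneg (norm_nonneg ℓ) hF0, mul_nonneg hapos.le hF0]
    have h6 : C₁ * (|F| + s) = ((1 + ‖ℓ‖ + |a| / 2) * (|F| + s)) / (|a| / 2) := by
      simp only [C₁]; field_simp
    rw [h6, le_div_iff₀ (by positivity)]
    exact h5
  clear_value C₁ S s u F
  constructor
  · refine hu.trans (mul_le_mul_of_nonneg_right ?_ (by positivity))
    nlinarith [mul_nonneg hK0 (sq_nonneg C₁)]
  · have hu2 : u ^ 2 ≤ 2 * C₁ ^ 2 * (|F| ^ 2 + S) := by
      rw [← sq_abs u, ← hsS]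
      calc |u| ^ 2 ≤ (C₁ * (|F| + s)) ^ 2 := by gcongr
        _ ≤ _ := by nlinarith [mul_nonneg (sq_nonneg C₁) (sq_nonneg (|F| - s))]
    calc (φ (x, y)).im ≤ K * (S + u ^ 2) := h4 ▸ h2
      _ ≤ K * ((2 * C₁ ^ 2 + 1) * (|F| ^ 2 + S)) := by
        refine mul_le_mul_of_nonneg_left ?_ hK0
        linarith [sq_nonneg |F|]
      _ = K * (2 * C₁ ^ 2 + 1) * (|F| ^ 2 + S) := by ring
      _ ≤ _ := by
        refine mul_le_mul_of_nonneg_right ?_ (by positivity)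
        linarith
end
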